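/- Let n ≥ 1. For integers m ≥ 1 define g_m^b(j) = Z_m^{{(j,j), b_m}}/Z_m ∈ ℚ for 0 ≤ j ≤ 2m−1, and g_m(i,j) = Z_m^{{(i,i),(j,j)}}/Z_m for 0 ≤ i < j ≤ 2m−1. Then for all integers 0 ≤ i < j ≤ 2n−1: if i = 0 then g_n(0,j) = 1 − g_n^b(j); if i = 1 then g_n(1,j) = (Z_{n−1}/Z_n)·g_{n−1}^b(j−2); and if i ≥ 2 then g_n(i,j) = g_{n−1}(i−2,j−2) − g_n^b(j)·g_{n−1}^b(i−2) + g_n^b(i)·g_{n−1}^b(j−2). -/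

import Mathlib

open Finset

/-- Membership predicate for the vertex set `V_n` of the TSSCPP graph `G_n`:
`0 ≤ x₁ ≤ 2n`, `x₁ ≤ x₂ ≤ 2n+1`, with `(2n,2n+1)` removed when `n` is odd. -/
def memV (n : ℕ) (x : ℤ × ℤ) : Prop :=
  0 ≤ x.1 ∧ x.1 ≤ 2*(n:ℤ) ∧ x.1 ≤ x.2 ∧ x.2 ≤ 2*(n:ℤ)+1 ∧
    ¬(n % 2 = 1 ∧ x.1 = 2*(n:ℤ) ∧ x.2 = 2*(n:ℤ)+1)

instance memV.decPred (n : ℕ) : DecidablePred (memV n) := fun x => by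
  unfold memV; infer_instance

/-- The vertex set `V_n` as a finite set. -/
noncomputable def Vfin (n : ℕ) : Finset (ℤ × ℤ) :=
  (Finset.Icc (0:ℤ) (2*(n:ℤ)) ×ˢ Finset.Icc (0:ℤ) (2*(n:ℤ)+1)).filter (memV n)

/-- The vertex set `V_n` as a set. -/
def Vset (n : ℕ) : Set (ℤ × ℤ) := {x | memV n x}

/-- The distinguished vertex `b_n = (2n, 2n+1-(n mod 2))`. -/
def bvertex (n : ℕ) : ℤ × ℤ := (2*(n:ℤ), 2*(n:ℤ)+1 - ((n % 2 : ℕ) : ℤ))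

/-- Edge relation (with `x` the "lower-left" endpoint) of the TSSCPP graph `G_n`:
horizontal edges `((x₁,x₂),(x₁+1,x₂))` for `0 ≤ x₁ ≤ 2n−1`, `x₁ ≤ x₂ ≤ 2n+1`, `x₁+x₂` odd;
vertical edges `((x₁,x₂),(x₁,x₂+1))` for `0 ≤ x₁ ≤ 2n` (`2n−1` when `n` odd), `x₁ ≤ x₂ ≤ 2n`;
diagonal edges `((x₁,x₁),(x₁+1,x₁+1))` for `0 ≤ x₁ ≤ 2n−1`. -/
def edgeRel (n : ℕ) (x y : ℤ × ℤ) : Prop :=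
  (y.1 = x.1 + 1 ∧ y.2 = x.2 ∧ 0 ≤ x.1 ∧ x.1 ≤ 2*(n:ℤ) - 1 ∧ x.1 ≤ x.2 ∧
      x.2 ≤ 2*(n:ℤ)+1 ∧ Odd (x.1 + x.2)) ∨
  (y.1 = x.1 ∧ y.2 = x.2 + 1 ∧ 0 ≤ x.1 ∧ x.1 ≤ 2*(n:ℤ) - ((n % 2 : ℕ) : ℤ) ∧
      x.1 ≤ x.2 ∧ x.2 ≤ 2*(n:ℤ)) ∨
  (x.1 = x.2 ∧ y.1 = x.1 + 1 ∧ y.2 = x.2 + 1 ∧ 0 ≤ x.1 ∧ x.1 ≤ 2*(n:ℤ) - 1)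

/-- The TSSCPP graph `G_n` (as a graph on all of `ℤ × ℤ`; all of its edges join
vertices of `V_n`). -/
def Gph (n : ℕ) : SimpleGraph (ℤ × ℤ) where
  Adj x y := edgeRel n x y ∨ edgeRel n y x
  symm := ⟨fun x y h => Or.symm h⟩
  loopless := by
    constructor
    rintro ⟨x1, x2⟩ (h | h) <;>
      rcases h with ⟨h1, h2, -⟩ | ⟨h1, h2, -⟩ | ⟨h0, h1, h2, -⟩ <;> omega

/-- `Zpm n U` = number of perfect matchings of the subgraph of `G_n` induced on `V_n \ U`. -/
noncomputable def Zpm (n : ℕ) (U : Set (ℤ × ℤ)) : ℕ :=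
  Nat.card {M : ((Gph n).induce (Vset n \ U)).Subgraph // M.IsPerfectMatching}

/-- `g_m^b(j) = Z_m^{{(j,j), b_m}} / Z_m`. -/
noncomputable def gb (m j : ℕ) : ℚ :=
  (Zpm m {((j:ℤ), (j:ℤ)), bvertex m} : ℚ) / (Zpm m ∅ : ℚ)

/-- `g_m(i,j) = Z_m^{{(i,i),(j,j)}} / Z_m`. -/
noncomputable def gfn (m i j : ℕ) : ℚ :=
  (Zpm m {((i:ℤ), (i:ℤ)), ((j:ℤ), (j:ℤ))} : ℚ) / (Zpm m ∅ : ℚ)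

/-!
All counts are reduced to counts `M(W)` of perfect matchings of induced subgraphs of one infinite
planar graph bounded by the diagonal. Superposing two matchings and switching along alternating
paths gives Kuo's condensation identity for four vertices that occur in this order on the boundary;
the graph is not bipartite, so all three ways of pairing up the four vertices contribute. A discrete
winding number shows that two alternating paths with interlaced endpoints on the diagonal must meet.

Condensation is applied to the diagonal vertices `1 < i < j < 2n`. Once `(1, 1)` is deleted the
first two columns can be matched in only one way, which turns every term involving `(1, 1)` into a
count for `n - 1`. The case `i = 0` comes from a local switching argument instead: the diagonal
vertices lie on a strip of triangles, and sliding along the strip shows that the deletions of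
`{(0, 0), (j, j)}` and of `{(j, j), b_n}` together account for all matchings.
-/

section Matchings

variable {α : Type*} {G : SimpleGraph α} {W : Set α} {σ : α → α} {a b v w : α}

/-- `σ` is a perfect matching of the subgraph of `G` induced on `W`. Matchings are encoded as
involutions of the whole vertex type that fix the vertices outside `W`, so that matchings of
different vertex sets can be composed. -/
structure IsMatchingOn (G : SimpleGraph α) (W : Set α) (σ : α → α) : Prop where
  involutive : Function.Involutive σ
  adj : ∀ v ∈ W, G.Adj v (σ v)
  eq_self : ∀ v ∉ W, σ v = v

/-- The number of perfect matchings of the subgraph of `G` induced on `W`, for finite `W`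
(with the junk value `0` if there are infinitely many). -/
noncomputable def matchNum (G : SimpleGraph α) (W : Set α) : ℕ :=
  {σ | IsMatchingOn G W σ}.ncard

namespace IsMatchingOn

lemma mem_iff_ne (hσ : IsMatchingOn G W σ) : v ∈ W ↔ σ v ≠ v :=
  ⟨fun hv => (hσ.adj v hv).ne', fun h => by_contra fun hv => h (hσ.eq_self v hv)⟩

lemma map_mem_iff (hσ : IsMatchingOn G W σ) : σ v ∈ W ↔ v ∈ W := by
  rw [hσ.mem_iff_ne, hσ.mem_iff_ne, hσ.involutive, ne_comm]

lemma adj_of_ne (hσ : IsMatchingOn G W σ) (hv : σ v ≠ v) : G.Adj v (σ v) :=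
  hσ.adj v (hσ.mem_iff_ne.2 hv)

lemma congr {H : SimpleGraph α} (h : ∀ v ∈ W, ∀ w ∈ W, G.Adj v w ↔ H.Adj v w) :
    IsMatchingOn G W σ ↔ IsMatchingOn H W σ :=
  ⟨fun hσ => ⟨hσ.involutive, fun v hv => (h v hv _ (hσ.map_mem_iff.2 hv)).1 (hσ.adj v hv),
    hσ.eq_self⟩,
   fun hσ => ⟨hσ.involutive, fun v hv => (h v hv _ (hσ.map_mem_iff.2 hv)).2 (hσ.adj v hv),
    hσ.eq_self⟩⟩

lemma preimage (e : G ≃g G) (hσ : IsMatchingOn G W σ) :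
    IsMatchingOn G (e ⁻¹' W) (e.symm ∘ σ ∘ e) where
  involutive v := by simp [hσ.involutive (e v)]
  adj v hv := by
    rw [← e.map_adj_iff]
    simpa using hσ.adj (e v) hv
  eq_self v hv := by simp [hσ.eq_self (e v) hv]

lemma piecewise {O A B : Set α} [∀ v, Decidable (v ∈ O)] {τ : α → α} (hσ : IsMatchingOn G A σ)
    (hτ : IsMatchingOn G B τ) (hσO : ∀ v ∈ O, σ v ∈ O)
    (hτO : ∀ v ∈ O, τ v ∈ O) : IsMatchingOn G (O.ite B A) (O.piecewise τ σ) := by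
  have hσO' : ∀ v ∉ O, σ v ∉ O := fun v hv h => hv (hσ.involutive v ▸ hσO _ h)
  refine ⟨fun v => ?_, fun v hv => ?_, fun v hv => ?_⟩ <;> by_cases hvO : v ∈ O
  · simp [hvO, hτO v hvO, hτ.involutive v]
  · simp [hvO, hσO' v hvO, hσ.involutive v]
  · simpa [hvO] using hτ.adj v (by simpa [Set.ite, hvO] using hv)
  · simpa [hvO] using hσ.adj v (by simpa [Set.ite, hvO] using hv)
  · simpa [hvO] using hτ.eq_self v (by simpa [Set.ite, hvO] using hv)
  · simpa [hvO] using hσ.eq_self v (by simpa [Set.ite, hvO] using hv)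

end IsMatchingOn

lemma isMatchingOn_id (G : SimpleGraph α) : IsMatchingOn G ∅ id :=
  ⟨fun _ => rfl, fun _ h => h.elim, fun _ _ => rfl⟩

lemma isMatchingOn_swap [DecidableEq α] (hab : G.Adj a b) :
    IsMatchingOn G {a, b} (Equiv.swap a b) where
  involutive := fun v => by simp
  adj := by rintro v (rfl | rfl) <;> simp [hab, hab.symm]
  eq_self v hv := Equiv.swap_apply_of_ne_of_ne (by rintro rfl; simp at hv)
    (by rintro rfl; simp at hv)

lemma finite_setOf_isMatchingOn (hW : W.Finite) : {σ | IsMatchingOn G W σ}.Finite := by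
  have := hW.to_subtype
  refine Set.Finite.of_injOn (f := fun σ : α → α => fun v : W => σ v)
    (t := {f | ∀ v, f v ∈ W}) (fun σ hσ v => hσ.map_mem_iff.2 v.2) (fun σ hσ τ hτ h => ?_)
    (Set.Finite.pi' fun _ => hW)
  funext v
  by_cases hv : v ∈ W
  · exact congrFun h ⟨v, hv⟩
  · rw [hσ.eq_self v hv, hτ.eq_self v hv]

lemma matchNum_congr {H : SimpleGraph α} (h : ∀ v ∈ W, ∀ w ∈ W, G.Adj v w ↔ H.Adj v w) :
    matchNum G W = matchNum H W :=
  congrArg Set.ncard (Set.ext fun _ => IsMatchingOn.congr h)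

lemma matchNum_empty (G : SimpleGraph α) : matchNum G ∅ = 1 :=
  Set.ncard_eq_one.2 ⟨id, Set.eq_singleton_iff_unique_mem.2
    ⟨isMatchingOn_id G, fun _ hσ => funext fun v => hσ.eq_self v (Set.notMem_empty v)⟩⟩

lemma matchNum_preimage (e : G ≃g G) (W : Set α) : matchNum G (e ⁻¹' W) = matchNum G W := by
  refine (Set.ncard_congr (fun σ _ => e.symm ∘ σ ∘ e) (fun σ hσ => hσ.preimage e)
    (fun σ τ _ _ h => ?_) fun σ hσ => ⟨e ∘ σ ∘ e.symm, ?_, ?_⟩).symm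
  · exact e.surjective.injective_comp_right (e.symm.injective.comp_left h)
  · simpa [← Set.preimage_comp] using hσ.preimage e.symm
  · funext v
    simp

/-- The subgraph of `G.induce W` whose edges are the pairs `{v, σ v}`. -/
def IsMatchingOn.subgraph (hσ : IsMatchingOn G W σ) : (G.induce W).Subgraph where
  verts := Set.univ
  Adj v w := σ v = w
  adj_sub := fun {v w} h => by simpa [← h] using hσ.adj v v.2
  edge_vert _ := Set.mem_univ _
  symm := ⟨fun v w h => by rw [← h, hσ.involutive]⟩

lemma IsMatchingOn.isPerfectMatching_subgraph (hσ : IsMatchingOn G W σ) :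
    hσ.subgraph.IsPerfectMatching :=
  SimpleGraph.Subgraph.isPerfectMatching_iff.2 fun v =>
    ⟨⟨σ v, hσ.map_mem_iff.2 v.2⟩, rfl, fun _ hw => Subtype.ext (Eq.symm hw)⟩

lemma IsMatchingOn.eq_of_subgraph_eq {τ : α → α} (hσ : IsMatchingOn G W σ)
    (hτ : IsMatchingOn G W τ) (h : hσ.subgraph = hτ.subgraph) : σ = τ := by
  funext v
  by_cases hv : v ∈ W
  · have hadj : hσ.subgraph.Adj ⟨v, hv⟩ ⟨σ v, hσ.map_mem_iff.2 hv⟩ := rfl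
    rw [h] at hadj
    exact Eq.symm hadj
  · rw [hσ.eq_self v hv, hτ.eq_self v hv]

lemma exists_isMatchingOn_subgraph_eq {M : (G.induce W).Subgraph} (hM : M.IsPerfectMatching) :
    ∃ σ, ∃ hσ : IsMatchingOn G W σ, hσ.subgraph = M := by
  classical
  rw [SimpleGraph.Subgraph.isPerfectMatching_iff] at hM
  choose f hf hunique using hM
  have hff v : f (f v) = v := (hunique _ _ (hf v).symm).symm
  have hσ : IsMatchingOn G W fun v => if h : v ∈ W then f ⟨v, h⟩ else v :=
    { involutive := fun v => by by_cases h : v ∈ W <;> simp [h, hff]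
      adj := fun v h => by simpa [h] using M.adj_sub (hf ⟨v, h⟩)
      eq_self := fun v h => by simp [h] }
  refine ⟨_, hσ, SimpleGraph.Subgraph.ext ?_ ?_⟩
  · exact (Set.eq_univ_of_forall fun v => M.edge_vert (hf v)).symm
  · ext v w
    have hadj : hσ.subgraph.Adj v w ↔ f v = w := by
      simp [IsMatchingOn.subgraph, Subtype.ext_iff]
    rw [hadj]
    exact ⟨fun h => h ▸ hf v, fun h => (hunique v w h).symm⟩

theorem card_isPerfectMatching_induce (G : SimpleGraph α) (W : Set α) :
    Nat.card {M : (G.induce W).Subgraph // M.IsPerfectMatching} = matchNum G W := by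
  rw [matchNum, ← Nat.card_coe_set_eq]
  refine (Nat.card_eq_of_bijective
    (fun σ => ⟨IsMatchingOn.subgraph σ.2, σ.2.isPerfectMatching_subgraph⟩) ⟨?_, ?_⟩).symm
  · exact fun σ τ h => Subtype.ext (σ.2.eq_of_subgraph_eq τ.2 (congrArg Subtype.val h))
  · rintro ⟨M, hM⟩
    obtain ⟨σ, hσ, rfl⟩ := exists_isMatchingOn_subgraph_eq hM
    exact ⟨⟨σ, hσ⟩, rfl⟩

lemma matchNum_eq_sdiff_pair (ha : a ∈ W) (hb : b ∈ W) (hab : G.Adj a b)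
    (hforced : ∀ σ, IsMatchingOn G W σ → σ a = b) : matchNum G W = matchNum G (W \ {a, b}) := by
  classical
  have hpair {σ} (hσ : IsMatchingOn G W σ) : σ a = b ∧ σ b = a :=
    ⟨hforced σ hσ, hforced σ hσ ▸ hσ.involutive a⟩
  have hW : Set.ite {a, b} {a, b} (W \ {a, b}) = W := by
    rw [Set.ite_left, Set.union_sdiff_cancel]
    rintro v (rfl | rfl) <;> assumption
  refine Set.ncard_congr (fun σ _ => Set.piecewise {a, b} id σ) (fun σ hσ => ?_)
    (fun σ τ hσ hτ h => ?_) fun σ hσ => ⟨Set.piecewise {a, b} (Equiv.swap a b) σ, ?_, ?_⟩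
  · have hmatch := hσ.piecewise (O := {a, b}) (isMatchingOn_id G)
      (by rintro v (rfl | rfl) <;> simp [hpair hσ]) fun v hv => hv
    rwa [Set.ite_empty_left] at hmatch
  · funext v
    by_cases hv : v ∈ ({a, b} : Set α)
    · rcases hv with rfl | rfl <;> simp only [hpair hσ, hpair hτ]
    · simpa only [Set.piecewise_eq_of_notMem _ _ _ hv] using congrFun h v
  · have hmatch := IsMatchingOn.piecewise (O := {a, b}) hσ (isMatchingOn_swap hab)
      (fun v hv => by rwa [hσ.eq_self v fun h => h.2 hv]) (by rintro v (rfl | rfl) <;> simp)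
    rwa [hW] at hmatch
  · funext v
    by_cases hv : v ∈ ({a, b} : Set α)
    · rw [Set.piecewise_eq_of_mem _ _ _ hv, id, hσ.eq_self v fun h => h.2 hv]
    · simp only [Set.piecewise_eq_of_notMem _ _ _ hv]

lemma matchNum_eq_sdiff_pair_of_unique_adj (ha : a ∈ W) (hb : b ∈ W)
    (hadj : ∀ v ∈ W, G.Adj a v ↔ v = b) : matchNum G W = matchNum G (W \ {a, b}) :=
  matchNum_eq_sdiff_pair ha hb ((hadj b hb).2 rfl) fun σ hσ =>
    (hadj (σ a) (hσ.map_mem_iff.2 ha)).1 (hσ.adj a ha)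

end Matchings

section Parity

variable {α : Type*} {O : Finset α} {P Q : α → Prop}

open Classical in
/-- The number of elements of `O` satisfying `P`, modulo 2. -/
noncomputable def parity (O : Finset α) (P : α → Prop) : ZMod 2 :=
  ∑ v ∈ O, if P v then 1 else 0

lemma parity_congr (h : ∀ v ∈ O, P v ↔ Q v) : parity O P = parity O Q := by
  classical
  exact Finset.sum_congr rfl fun v hv => by simp only [h v hv]

lemma parity_eq_zero (h : ∀ v ∈ O, ¬P v) : parity O P = 0 :=
  Finset.sum_eq_zero fun v hv => by simp [h v hv]

lemma parity_eq_one {a : α} (ha : a ∈ O) (h : ∀ v ∈ O, P v ↔ v = a) : parity O P = 1 := by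
  classical
  rw [parity_congr h, parity, Finset.sum_ite_eq' O a, if_pos ha]

lemma parity_add (O : Finset α) (P Q : α → Prop) :
    parity O P + parity O Q = parity O fun v => Xor (P v) (Q v) := by
  classical
  rw [parity, parity, ← Finset.sum_add_distrib]
  refine Finset.sum_congr rfl fun v _ => ?_
  by_cases hP : P v <;> by_cases hQ : Q v <;> simp [hP, hQ, Xor, CharTwo.add_self_eq_zero]

lemma parity_comp_involutive {σ : α → α} (hσ : Function.Involutive σ) (hO : ∀ v ∈ O, σ v ∈ O)
    (P : α → Prop) : parity O (fun v => P (σ v)) = parity O P :=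
  Finset.sum_nbij' σ σ hO hO (fun v _ => hσ v) (fun v _ => hσ v) fun _ _ => rfl

lemma parity_eq_zero_of_involutive {σ : α → α} (hσ : Function.Involutive σ)
    (hO : ∀ v ∈ O, σ v ∈ O) (hP : ∀ v, P v → P (σ v)) (hne : ∀ v, P v → σ v ≠ v) :
    parity O P = 0 := by
  have hP' v : P (σ v) ↔ P v := ⟨fun h => hσ v ▸ hP _ h, hP v⟩
  classical
  rw [parity]
  refine Finset.sum_involution (fun v _ => σ v) (fun v _ => ?_) (fun v _ hv => ?_)
    (fun v hv => hO v hv) fun v _ => hσ v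
  · simp only [hP', CharTwo.add_self_eq_zero]
  · exact hne v (of_not_not fun h => hv (by rw [if_neg h]))

end Parity

section Superposition

variable {α : Type*} {G : SimpleGraph α} {A B : Set α} {σ τ : α → α} {a u v : α}

/-- A matching pairs off the matched vertices of a region `R`, except for those that are matched
across its boundary. -/
lemma IsMatchingOn.parity_leaving {O : Finset α} (hσ : IsMatchingOn G A σ)
    (hO : ∀ v ∈ O, σ v ∈ O) (R : α → Prop) :
    parity O (fun v => R v ∧ ¬R (σ v)) = parity O fun v => R v ∧ v ∈ A := by
  rw [← sub_eq_zero, CharTwo.sub_eq_add, parity_add]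
  have hcases v : Xor (R v ∧ ¬R (σ v)) (R v ∧ v ∈ A) ↔ R v ∧ R (σ v) ∧ v ∈ A := by
    have hfix : v ∉ A → (R (σ v) ↔ R v) := fun hv => by rw [hσ.eq_self v hv]
    simp only [Xor]
    tauto
  rw [parity_congr fun v _ => hcases v]
  refine parity_eq_zero_of_involutive hσ.involutive hO ?_ fun v hv => hσ.mem_iff_ne.1 hv.2.2
  rintro v ⟨hv, hσv, hvA⟩
  exact ⟨hσv, (hσ.involutive v).symm ▸ hv, hσ.map_mem_iff.2 hvA⟩

lemma IsMatchingOn.parity_leaving_add {O : Finset α} (hσ : IsMatchingOn G A σ)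
    (hτ : IsMatchingOn G B τ) (hσO : ∀ v ∈ O, σ v ∈ O) (hτO : ∀ v ∈ O, τ v ∈ O)
    (R : α → Prop) :
    parity O (fun v => R v ∧ ¬R (σ v)) + parity O (fun v => R v ∧ ¬R (τ v)) =
      parity O fun v => R v ∧ v ∈ symmDiff A B := by
  rw [hσ.parity_leaving hσO, hτ.parity_leaving hτO, parity_add]
  refine parity_congr fun v _ => ?_
  simp only [Xor, Set.mem_symmDiff]
  tauto

lemma IsMatchingOn.parity_symmDiff {O : Finset α} (hσ : IsMatchingOn G A σ)
    (hτ : IsMatchingOn G B τ) (hσO : ∀ v ∈ O, σ v ∈ O) (hτO : ∀ v ∈ O, τ v ∈ O) :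
    parity O (· ∈ symmDiff A B) = 0 := by
  have hall := hσ.parity_leaving_add hτ hσO hτO fun _ => True
  simpa only [true_and, not_true_eq_false, parity_eq_zero fun _ _ => id, add_zero, eq_comm]
    using hall

/-- The vertices reachable from `a` by applying `σ` and `τ`. If `σ` and `τ` are matchings, this is
the component of `a` in the union of the two matchings. -/
def pairOrbit (σ τ : α → α) (a : α) : Set α :=
  {v | Relation.ReflTransGen (fun u w => w = σ u ∨ w = τ u) a v}

lemma self_mem_pairOrbit (σ τ : α → α) (a : α) : a ∈ pairOrbit σ τ a := .refl

lemma map_left_mem_pairOrbit (hv : v ∈ pairOrbit σ τ a) : σ v ∈ pairOrbit σ τ a :=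
  .tail hv (.inl rfl)

lemma map_right_mem_pairOrbit (hv : v ∈ pairOrbit σ τ a) : τ v ∈ pairOrbit σ τ a :=
  .tail hv (.inr rfl)

lemma pairOrbit_subset {O : Set α} (ha : a ∈ O) (hσ : ∀ v ∈ O, σ v ∈ O) (hτ : ∀ v ∈ O, τ v ∈ O) :
    pairOrbit σ τ a ⊆ O := by
  intro v hv
  induction hv with
  | refl => exact ha
  | tail _ hstep ih => rcases hstep with rfl | rfl <;> [exact hσ _ ih; exact hτ _ ih]

lemma pairOrbit_comm (σ τ : α → α) (a : α) : pairOrbit σ τ a = pairOrbit τ σ a := by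
  simp only [pairOrbit, or_comm]

lemma mem_pairOrbit_symm (hσ : Function.Involutive σ) (hτ : Function.Involutive τ)
    (hu : u ∈ pairOrbit σ τ a) : a ∈ pairOrbit σ τ u := by
  refine pairOrbit_subset (O := {v | v ∈ pairOrbit σ τ u → a ∈ pairOrbit σ τ u})
    id (fun v hv h => hv ?_) (fun v hv h => hv ?_) hu (self_mem_pairOrbit σ τ u)
  · exact hσ v ▸ map_left_mem_pairOrbit h
  · exact hτ v ▸ map_right_mem_pairOrbit h

lemma pairOrbit_subset_of_mem (hu : u ∈ pairOrbit σ τ a) : pairOrbit σ τ u ⊆ pairOrbit σ τ a :=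
  pairOrbit_subset hu (fun _ => map_left_mem_pairOrbit) fun _ => map_right_mem_pairOrbit

/-- The involutions `σ` and `τ` generate a dihedral group, whose rotations already act transitively
on the orbit of a point fixed by one of them. -/
lemma exists_zpow_of_mem_pairOrbit {σ τ : Equiv.Perm α} (hσ : σ * σ = 1) (hτ : τ * τ = 1)
    (ha : σ a = a) (hv : v ∈ pairOrbit σ τ a) :
    ∃ k : ℤ, v = ((σ * τ) ^ k) a ∧ σ v = ((σ * τ) ^ (-k)) a ∧
      τ v = ((σ * τ) ^ (-(k + 1))) a := by
  have hσ' : SemiconjBy σ (σ * τ) (σ * τ)⁻¹ := by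
    rw [SemiconjBy, mul_inv_rev, inv_eq_of_mul_eq_one_left hσ, inv_eq_of_mul_eq_one_left hτ,
      mul_assoc τ, hσ, ← mul_assoc, hσ, one_mul, mul_one]
  have hσk (k : ℤ) : σ (((σ * τ) ^ k) a) = ((σ * τ) ^ (-k)) a := by
    rw [← Equiv.Perm.mul_apply, (hσ'.zpow_right k).eq, Equiv.Perm.mul_apply, ha, inv_zpow']
  have hτk (k : ℤ) : τ (((σ * τ) ^ k) a) = ((σ * τ) ^ (-(k + 1))) a := by
    have hτ_eq : τ = σ * (σ * τ) := by rw [← mul_assoc, hσ, one_mul]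
    rw [← hσk, zpow_add_one, (Commute.zpow_self (σ * τ) k).eq]
    nth_rw 1 [hτ_eq]
    simp only [Equiv.Perm.mul_apply]
  have hrot : pairOrbit σ τ a ⊆ Set.range fun k : ℤ => ((σ * τ) ^ k) a := by
    refine pairOrbit_subset ⟨0, rfl⟩ ?_ ?_ <;> rintro _ ⟨k, rfl⟩
    exacts [⟨_, (hσk k).symm⟩, ⟨_, (hτk k).symm⟩]
  obtain ⟨k, rfl⟩ := hrot hv
  exact ⟨k, rfl, hσk k, hτk k⟩

lemma two_mul_emod_add_eq {N : ℕ} {k e : ℤ} (hdvd : (N : ℤ) ∣ 2 * k + e) (hk : ¬(N : ℤ) ∣ k)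
    (he : e = 0 ∨ e = 1) : 2 * (k % N) + e = N := by
  rcases N.eq_zero_or_pos with rfl | hN
  · simp only [Nat.cast_zero, zero_dvd_iff] at hdvd hk
    omega
  have hpos : 0 < k % N :=
    (Int.emod_nonneg k (by omega)).lt_of_ne fun h => hk (Int.dvd_of_emod_eq_zero h.symm)
  have hlt := Int.emod_lt_of_pos k (show (0 : ℤ) < N by omega)
  have hdvd' : (N : ℤ) ∣ 2 * (k % N) + e - N := by
    have : 2 * (k % N) + e - N = 2 * k + e - N * (2 * (k / N) + 1) := by
      linear_combination 2 * Int.emod_add_mul_ediv k N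
    exact this ▸ hdvd.sub (Dvd.intro _ rfl)
  exact sub_eq_zero.1 (Int.eq_zero_of_abs_lt_dvd hdvd' (abs_lt.2 (by omega)))

/-- Components of a superposition of two matchings are paths or cycles, so besides `a` they have at
most one further end. -/
theorem eq_of_mem_pairOrbit (hσ : Function.Involutive σ) (hτ : Function.Involutive τ)
    (ha : σ a = a ∨ τ a = a) (hu : u ∈ pairOrbit σ τ a) (hv : v ∈ pairOrbit σ τ a)
    (hua : u ≠ a) (hva : v ≠ a) (hu' : σ u = u ∨ τ u = u) (hv' : σ v = v ∨ τ v = v) : u = v := by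
  wlog haσ : σ a = a generalizing σ τ
  · rw [pairOrbit_comm] at hu hv
    exact this hτ hσ ha.symm hu hv hu'.symm hv'.symm (ha.resolve_left haσ)
  set ρ : Equiv.Perm α := hσ.toPerm * hτ.toPerm
  set N := Function.minimalPeriod (ρ • ·) a
  have heq (k l : ℤ) : (ρ ^ k) a = (ρ ^ l) a ↔ (N : ℤ) ∣ k - l := by
    rw [← MulAction.zpow_smul_eq_iff_minimalPeriod_dvd, ← neg_add_eq_sub, zpow_add, zpow_neg,
      Equiv.Perm.smul_def, Equiv.Perm.mul_apply, Equiv.Perm.inv_eq_iff_eq]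
  have hend {w : α} (hw : w ∈ pairOrbit σ τ a) (hwa : w ≠ a) (hw' : σ w = w ∨ τ w = w) :
      ∃ k e : ℤ, w = (ρ ^ k) a ∧ (e = 0 ∨ e = 1) ∧ 2 * (k % N) + e = N := by
    obtain ⟨k, hk, hσk, hτk⟩ := exists_zpow_of_mem_pairOrbit (σ := hσ.toPerm) (τ := hτ.toPerm)
      (Equiv.ext hσ) (Equiv.ext hτ) haσ hw
    have hNk : ¬(N : ℤ) ∣ k := fun h => hwa (hk.trans ((heq k 0).2 (by simpa using h)))
    rcases hw' with hσw | hτw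
    · refine ⟨k, 0, hk, .inl rfl, two_mul_emod_add_eq ?_ hNk (.inl rfl)⟩
      have h := (heq k (-k)).1 (hk.symm.trans (hσw.symm.trans hσk))
      rwa [sub_neg_eq_add, ← two_mul, ← add_zero (2 * k)] at h
    · refine ⟨k, 1, hk, .inr rfl, two_mul_emod_add_eq ?_ hNk (.inr rfl)⟩
      have h := (heq k (-(k + 1))).1 (hk.symm.trans (hτw.symm.trans hτk))
      rwa [sub_neg_eq_add, ← add_assoc, ← two_mul] at h
  obtain ⟨k, e, rfl, he, hke⟩ := hend hu hua hu'
  obtain ⟨l, f, rfl, hf, hlf⟩ := hend hv hva hv'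
  exact (heq k l).2 (Int.ModEq.dvd (show l % N = k % N by omega))

lemma finite_pairOrbit (hA : A.Finite) (hB : B.Finite) (hσ : IsMatchingOn G A σ)
    (hτ : IsMatchingOn G B τ) : (pairOrbit σ τ a).Finite := by
  refine ((hA.union hB).insert a).subset
    (pairOrbit_subset (Set.mem_insert _ _) (fun v hv => ?_) fun v hv => ?_)
  · by_cases h : v ∈ A
    · exact .inr (.inl (hσ.map_mem_iff.2 h))
    · rwa [hσ.eq_self v h]
  · by_cases h : v ∈ B
    · exact .inr (.inr (hτ.map_mem_iff.2 h))
    · rwa [hτ.eq_self v h]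

lemma fixed_of_mem_symmDiff (hσ : IsMatchingOn G A σ) (hτ : IsMatchingOn G B τ)
    (hv : v ∈ symmDiff A B) : σ v = v ∨ τ v = v :=
  hv.symm.imp (fun h => hσ.eq_self v h.2) fun h => hτ.eq_self v h.2

theorem exists_mem_pairOrbit (hA : A.Finite) (hB : B.Finite) (hσ : IsMatchingOn G A σ)
    (hτ : IsMatchingOn G B τ) (ha : a ∈ symmDiff A B) :
    ∃ x ∈ symmDiff A B, x ≠ a ∧ x ∈ pairOrbit σ τ a := by
  have hfin := finite_pairOrbit (a := a) hA hB hσ hτ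
  by_contra! honly
  have hzero := hσ.parity_symmDiff hτ (O := hfin.toFinset)
    (by simpa using fun _ => map_left_mem_pairOrbit)
    (by simpa using fun _ => map_right_mem_pairOrbit)
  rw [parity_eq_one (a := a)] at hzero
  · exact absurd hzero (by decide)
  · simpa using self_mem_pairOrbit σ τ a
  · intro v hv
    rw [Set.Finite.mem_toFinset] at hv
    exact ⟨fun h => of_not_not fun hva => honly v h hva hv, fun h => h ▸ ha⟩

end Superposition

section Condensation

variable {α : Type*} {G : SimpleGraph α} {A B W : Set α} {σ τ : α → α} {a b c d x : α}
  {p : (α → α) × (α → α)}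

open Classical in
/-- Exchanges two matchings along the component of `a` in their superposition. -/
noncomputable def orbitSwap (a : α) (p : (α → α) × (α → α)) : (α → α) × (α → α) :=
  ((pairOrbit p.1 p.2 a).piecewise p.2 p.1, (pairOrbit p.1 p.2 a).piecewise p.1 p.2)

lemma pairOrbit_orbitSwap (a : α) (p : (α → α) × (α → α)) :
    pairOrbit (orbitSwap a p).1 (orbitSwap a p).2 a = pairOrbit p.1 p.2 a := by
  have hfst {v} (hv : v ∈ pairOrbit p.1 p.2 a) : (orbitSwap a p).1 v = p.2 v := by
    simp [orbitSwap, hv]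
  have hsnd {v} (hv : v ∈ pairOrbit p.1 p.2 a) : (orbitSwap a p).2 v = p.1 v := by
    simp [orbitSwap, hv]
  refine subset_antisymm ?_ fun v hv => ?_
  · refine pairOrbit_subset (self_mem_pairOrbit _ _ a) (fun v hv => ?_) fun v hv => ?_
    · exact hfst hv ▸ map_right_mem_pairOrbit hv
    · exact hsnd hv ▸ map_left_mem_pairOrbit hv
  · refine (pairOrbit_subset (σ := p.1) (τ := p.2)
      (O := pairOrbit p.1 p.2 a ∩ pairOrbit (orbitSwap a p).1 (orbitSwap a p).2 a)
      ⟨self_mem_pairOrbit _ _ a, self_mem_pairOrbit _ _ a⟩ ?_ ?_ hv).2 <;> rintro u ⟨hu, hu'⟩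
    · exact ⟨map_left_mem_pairOrbit hu, hsnd hu ▸ map_right_mem_pairOrbit hu'⟩
    · exact ⟨map_right_mem_pairOrbit hu, hfst hu ▸ map_left_mem_pairOrbit hu'⟩

lemma orbitSwap_involutive (a : α) : Function.Involutive (orbitSwap a) := by
  intro p
  rw [orbitSwap, pairOrbit_orbitSwap]
  ext v <;> by_cases hv : v ∈ pairOrbit p.1 p.2 a <;> simp [orbitSwap, hv]

/-- Pairs of a matching of `A` and a matching of `B` whose superposition has `a` and `x` in the same
component. -/
def linkedPairs (G : SimpleGraph α) (A B : Set α) (a x : α) : Set ((α → α) × (α → α)) :=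
  {p | IsMatchingOn G A p.1 ∧ IsMatchingOn G B p.2 ∧ x ∈ pairOrbit p.1 p.2 a}

lemma finite_linkedPairs (hA : A.Finite) (hB : B.Finite) (a x : α) :
    (linkedPairs G A B a x).Finite :=
  ((finite_setOf_isMatchingOn hA).prod (finite_setOf_isMatchingOn hB)).subset
    fun _ hp => ⟨hp.1, hp.2.1⟩

lemma ncard_linkedPairs_comm (G : SimpleGraph α) (A B : Set α) (a x : α) :
    (linkedPairs G A B a x).ncard = (linkedPairs G B A a x).ncard :=
  Set.ncard_congr (fun p _ => p.swap)
    (fun p hp => ⟨hp.2.1, hp.1, pairOrbit_comm p.1 p.2 a ▸ hp.2.2⟩)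
    (fun _ _ _ _ h => Prod.swap_injective h)
    fun p hp => ⟨p.swap, ⟨hp.2.1, hp.1, pairOrbit_comm p.1 p.2 a ▸ hp.2.2⟩, p.swap_swap⟩

lemma ite_eq_symmDiff {O T : Set α} (h : O ∩ symmDiff A B = T) : O.ite B A = symmDiff A T := by
  subst h
  ext v
  simp only [Set.ite, Set.mem_union, Set.mem_inter_iff, Set.mem_sdiff, Set.mem_symmDiff]
  tauto

lemma pairOrbit_inter_symmDiff (hσ : IsMatchingOn G A σ) (hτ : IsMatchingOn G B τ)
    (ha : a ∈ symmDiff A B) (hx : x ∈ symmDiff A B) (hax : a ≠ x) (hlink : x ∈ pairOrbit σ τ a) :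
    pairOrbit σ τ a ∩ symmDiff A B = {a, x} := by
  refine subset_antisymm ?_ ?_
  · refine fun v ⟨hv, hvT⟩ => or_iff_not_imp_left.2 fun hva => ?_
    exact eq_of_mem_pairOrbit hσ.involutive hτ.involutive (fixed_of_mem_symmDiff hσ hτ ha) hv hlink
      hva hax.symm (fixed_of_mem_symmDiff hσ hτ hvT) (fixed_of_mem_symmDiff hσ hτ hx)
  · rintro v (rfl | rfl)
    exacts [⟨self_mem_pairOrbit σ τ v, ha⟩, ⟨hlink, hx⟩]

lemma orbitSwap_mem_linkedPairs (ha : a ∈ symmDiff A B) (hx : x ∈ symmDiff A B) (hax : a ≠ x)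
    (hp : p ∈ linkedPairs G A B a x) :
    orbitSwap a p ∈ linkedPairs G (symmDiff A {a, x}) (symmDiff B {a, x}) a x := by
  classical
  obtain ⟨hσ, hτ, hlink⟩ := hp
  have hends := pairOrbit_inter_symmDiff hσ hτ ha hx hax hlink
  refine ⟨?_, ?_, (pairOrbit_orbitSwap a p).symm ▸ hlink⟩
  · rw [← ite_eq_symmDiff hends]
    exact hσ.piecewise hτ (fun _ => map_left_mem_pairOrbit) fun _ => map_right_mem_pairOrbit
  · rw [← ite_eq_symmDiff (symmDiff_comm A B ▸ hends)]
    exact hτ.piecewise hσ (fun _ => map_right_mem_pairOrbit) fun _ => map_left_mem_pairOrbit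

lemma ncard_linkedPairs_symmDiff (ha : a ∈ symmDiff A B) (hx : x ∈ symmDiff A B) (hax : a ≠ x) :
    (linkedPairs G (symmDiff A {a, x}) (symmDiff B {a, x}) a x).ncard =
      (linkedPairs G A B a x).ncard := by
  have hT : symmDiff (symmDiff A {a, x}) (symmDiff B {a, x}) = symmDiff A B := by
    rw [symmDiff_symmDiff_symmDiff_comm, symmDiff_self, symmDiff_bot]
  refine (Set.ncard_congr (fun p _ => orbitSwap a p)
    (fun p hp => orbitSwap_mem_linkedPairs ha hx hax hp)
    (fun p q _ _ h => (orbitSwap_involutive a).injective h) fun q hq =>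
      ⟨orbitSwap a q, ?_, orbitSwap_involutive a q⟩).symm
  have hswap := orbitSwap_mem_linkedPairs (by rwa [hT]) (by rwa [hT]) hax hq
  rwa [symmDiff_symmDiff_cancel_right, symmDiff_symmDiff_cancel_right] at hswap

/-- In a superposition of two matchings with ends `a`, `b`, `c`, `d`, no path joins `b` and `d`.
This holds if `a`, `b`, `c`, `d` lie in this cyclic order on the outer face of a planar graph. -/
def Noncrossing (G : SimpleGraph α) (a b c d : α) : Prop :=
  ∀ ⦃A B : Set α⦄ ⦃σ τ : α → α⦄, A.Finite → B.Finite → IsMatchingOn G A σ → IsMatchingOn G B τ →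
    symmDiff A B = {a, b, c, d} → d ∉ pairOrbit σ τ b

lemma matchNum_mul_matchNum (hA : A.Finite) (hB : B.Finite) (hnodup : [a, b, c, d].Nodup)
    (hcross : Noncrossing G a b c d) (hT : symmDiff A B = {a, b, c, d}) :
    matchNum G A * matchNum G B =
      (linkedPairs G A B a b).ncard + (linkedPairs G A B a d).ncard := by
  simp only [List.nodup_cons, List.mem_cons, List.not_mem_nil, not_or, or_false] at hnodup
  obtain ⟨⟨hab, hac, had⟩, ⟨hbc, hbd⟩, hcd, -⟩ := hnodup
  have hends {p x} (hp : p ∈ linkedPairs G A B a x) (hx : x ∈ symmDiff A B) (hax : a ≠ x) :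
      pairOrbit p.1 p.2 a ∩ symmDiff A B = {a, x} :=
    pairOrbit_inter_symmDiff hp.1 hp.2.1 (by simp [hT]) hx hax hp.2.2
  have hdisj : Disjoint (linkedPairs G A B a b) (linkedPairs G A B a d) :=
    Set.disjoint_left.2 fun p hpb hpd => by
      have hmem : d ∈ pairOrbit p.1 p.2 a ∩ symmDiff A B := ⟨hpd.2.2, by simp [hT]⟩
      rw [hends hpb (by simp [hT]) hab] at hmem
      exact hmem.elim (Ne.symm had) (Ne.symm hbd)
  rw [matchNum, matchNum, ← Set.ncard_prod, ← Set.ncard_union_eq hdisj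
    (finite_linkedPairs hA hB a b) (finite_linkedPairs hA hB a d)]
  congr 1
  refine subset_antisymm (fun p ⟨hσ, hτ⟩ => ?_)
    (Set.union_subset (fun p hp => ⟨hp.1, hp.2.1⟩) fun p hp => ⟨hp.1, hp.2.1⟩)
  obtain ⟨x, hxT, hxa, hx⟩ := exists_mem_pairOrbit (a := a) hA hB hσ hτ (by simp [hT])
  rw [hT] at hxT
  rcases hxT with rfl | rfl | rfl | rfl
  · exact absurd rfl hxa
  · exact .inl ⟨hσ, hτ, hx⟩
  · suffices hb : b ∈ pairOrbit p.1 p.2 a by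
      have hmem : b ∈ pairOrbit p.1 p.2 a ∩ symmDiff A B := ⟨hb, by simp [hT]⟩
      rw [hends ⟨hσ, hτ, hx⟩ (by simp [hT]) hac] at hmem
      exact (hmem.elim (Ne.symm hab) hbc).elim
    obtain ⟨y, hyT, hyb, hy⟩ := exists_mem_pairOrbit (a := b) hA hB hσ hτ (by simp [hT])
    rw [hT] at hyT
    have hsymm := mem_pairOrbit_symm hσ.involutive hτ.involutive hy
    rcases hyT with rfl | rfl | rfl | rfl
    · exact hsymm
    · exact absurd rfl hyb
    · exact pairOrbit_subset_of_mem hx hsymm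
    · exact absurd hy (hcross hA hB hσ hτ hT)
  · exact .inr ⟨hσ, hτ, hx⟩

lemma matchNum_mul_matchNum_symmDiff (hA : A.Finite) (hB : B.Finite)
    (hnodup : [a, b, c, d].Nodup) (hcross : Noncrossing G a b c d)
    (hT : symmDiff A B = {a, b, c, d}) :
    matchNum G A * matchNum G B =
      (linkedPairs G (symmDiff A {a, b}) (symmDiff B {a, b}) a b).ncard +
        (linkedPairs G (symmDiff A {a, d}) (symmDiff B {a, d}) a d).ncard := by
  rw [matchNum_mul_matchNum hA hB hnodup hcross hT]
  simp only [List.nodup_cons, List.mem_cons, List.not_mem_nil, not_or, or_false] at hnodup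
  rw [ncard_linkedPairs_symmDiff (by simp [hT]) (by simp [hT]) hnodup.1.1,
    ncard_linkedPairs_symmDiff (by simp [hT]) (by simp [hT]) hnodup.1.2.2]

theorem kuo_condensation (hW : W.Finite) (hnodup : [a, b, c, d].Nodup)
    (hcross : Noncrossing G a b c d) :
    matchNum G W * matchNum G (symmDiff W {a, b, c, d}) +
        matchNum G (symmDiff W {a, c}) * matchNum G (symmDiff W {b, d}) =
      matchNum G (symmDiff W {a, b}) * matchNum G (symmDiff W {c, d}) +
        matchNum G (symmDiff W {a, d}) * matchNum G (symmDiff W {b, c}) := by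
  have hne := hnodup
  simp only [List.nodup_cons, List.mem_cons, List.not_mem_nil, not_or, or_false] at hne
  have hquad : ({a, b, c, d} : Set α) = symmDiff {a, c} {b, d} ∧
      ({a, b, c, d} : Set α) = symmDiff {a, b} {c, d} ∧
      ({a, b, c, d} : Set α) = symmDiff {a, d} {b, c} := by grind
  have habcd : symmDiff {a, b, c, d} {a, b} = ({c, d} : Set α) ∧
      symmDiff {a, b, c, d} {a, d} = ({b, c} : Set α) := by grind
  have hac : symmDiff {a, c} {a, b} = ({b, c} : Set α) ∧
      symmDiff {a, c} {a, d} = ({c, d} : Set α) := by grind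
  have hbd : symmDiff {b, d} {a, b} = ({a, d} : Set α) ∧
      symmDiff {b, d} {a, d} = ({a, b} : Set α) := by grind
  have hT (S T : Set α) (h : {a, b, c, d} = symmDiff S T) :
      symmDiff (symmDiff W S) (symmDiff W T) = {a, b, c, d} := by
    rw [symmDiff_symmDiff_symmDiff_comm, symmDiff_self, bot_symmDiff, h]
  have hfin (u v : α) : (symmDiff W {u, v}).Finite := hW.symmDiff (by simp)
  have h₀ := symmDiff_symmDiff_cancel_left W {a, b, c, d}
  rw [matchNum_mul_matchNum_symmDiff hW (hW.symmDiff (by simp)) hnodup hcross h₀,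
    matchNum_mul_matchNum_symmDiff (hfin a c) (hfin b d) hnodup hcross (hT _ _ hquad.1),
    matchNum_mul_matchNum (hfin a b) (hfin c d) hnodup hcross (hT _ _ hquad.2.1),
    matchNum_mul_matchNum (hfin a d) (hfin b c) hnodup hcross (hT _ _ hquad.2.2)]
  simp only [symmDiff_assoc W, habcd, hac, hbd]
  rw [ncard_linkedPairs_comm G (symmDiff W {b, c}), ncard_linkedPairs_comm G (symmDiff W {c, d})]
  ring

end Condensation

section Honeycomb

/-- The edges of `honeyGraph`, with `x` the lower-left endpoint. -/
def honeyRel (x y : ℤ × ℤ) : Prop :=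
  (y.1 = x.1 + 1 ∧ y.2 = x.2 ∧ x.1 ≤ x.2 ∧ Odd (x.1 + x.2)) ∨
  (y.1 = x.1 ∧ y.2 = x.2 + 1 ∧ x.1 ≤ x.2) ∨
  (x.1 = x.2 ∧ y.1 = x.1 + 1 ∧ y.2 = x.2 + 1)

/-- The infinite graph on the half-plane `x₁ ≤ x₂` in which every `G_n` is an induced subgraph. -/
def honeyGraph : SimpleGraph (ℤ × ℤ) where
  Adj x y := honeyRel x y ∨ honeyRel y x
  symm := ⟨fun _ _ h => Or.symm h⟩
  loopless := ⟨fun x h => by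
    simp only [honeyRel] at h
    omega⟩

/-- The boundary vertex `(k, k)`. -/
def diagVertex (k : ℤ) : ℤ × ℤ := (k, k)

lemma diagVertex_injective : Function.Injective diagVertex :=
  fun _ _ h => congrArg Prod.fst h

lemma honeyGraph_adj {x y : ℤ × ℤ} : honeyGraph.Adj x y ↔ honeyRel x y ∨ honeyRel y x := Iff.rfl

variable {O : Finset (ℤ × ℤ)} {A B : Set (ℤ × ℤ)} {σ τ : ℤ × ℤ → ℤ × ℤ} {x y : ℤ}

/-- The parity of the number of edges of `σ` inside `O` that leave column `x` to the right from a
height below `y`, i.e. that cross the vertical ray pointing downwards from `(x, y)`. -/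
noncomputable def rayCrossings (O : Finset (ℤ × ℤ)) (σ : ℤ × ℤ → ℤ × ℤ) (x y : ℤ) : ZMod 2 :=
  parity O fun v => v.1 = x ∧ v.2 < y ∧ (σ v).1 = x + 1

lemma rayCrossings_succ (h : (x, y) ∉ O) : rayCrossings O σ x (y + 1) = rayCrossings O σ x y := by
  refine parity_congr fun v hv => ?_
  have hne : v.1 = x → v.2 ≠ y := fun hx hy => h (by rwa [← hx, ← hy])
  omega

lemma rayCrossings_diag (hσ : IsMatchingOn honeyGraph A σ) (k : ℤ) : rayCrossings O σ k k = 0 := by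
  refine parity_eq_zero fun v _ hv => ?_
  have hadj := hσ.adj_of_ne (v := v) fun h => by rw [h] at hv; omega
  simp only [honeyGraph_adj, honeyRel] at hadj
  omega

lemma rayCrossings_add_rayCrossings (hσ : IsMatchingOn honeyGraph A σ) (hO : ∀ v ∈ O, σ v ∈ O)
    (hxy : x < y) (hmem : (x + 1, y) ∉ O) :
    rayCrossings O σ x y + rayCrossings O σ (x + 1) y =
      parity O fun v => (v.1 = x + 1 ∧ v.2 < y) ∧ ¬((σ v).1 = x + 1 ∧ (σ v).2 < y) := by
  rw [rayCrossings, rayCrossings, ← parity_comp_involutive hσ.involutive hO, parity_add]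
  refine parity_congr fun v hv => ?_
  have hv' : v ≠ (x + 1, y) := fun h => hmem (h ▸ hv)
  have hσv' : σ v ≠ (x + 1, y) := fun h => hmem (h ▸ hO v hv)
  rw [hσ.involutive v]
  by_cases hfix : σ v = v
  · simp only [hfix, Xor]
    omega
  · have hadj := hσ.adj_of_ne hfix
    simp only [honeyGraph_adj, honeyRel] at hadj
    simp only [ne_eq, Prod.ext_iff] at hv' hσv'
    simp only [Xor]
    omega

/-- The number, modulo 2, of paths of the superposition of `σ` and `τ` inside `O` that separate
`(x, y)` from the far left part of the boundary. -/
noncomputable def windingParity (O : Finset (ℤ × ℤ)) (σ τ : ℤ × ℤ → ℤ × ℤ) (T : Set (ℤ × ℤ))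
    (v : ℤ × ℤ) : ZMod 2 :=
  rayCrossings O σ v.1 v.2 + rayCrossings O τ v.1 v.2 + parity O fun u => u ∈ T ∧ u.1 ≤ v.1

lemma windingParity_add_one_left (hσ : IsMatchingOn honeyGraph A σ)
    (hτ : IsMatchingOn honeyGraph B τ) (hσO : ∀ v ∈ O, σ v ∈ O) (hτO : ∀ v ∈ O, τ v ∈ O)
    (hT : ∀ v ∈ symmDiff A B, v.1 = v.2) (hxy : x < y) (hmem : (x + 1, y) ∉ O) :
    windingParity O σ τ (symmDiff A B) (x + 1, y) = windingParity O σ τ (symmDiff A B) (x, y) := by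
  have hends : parity O (fun v => v ∈ symmDiff A B ∧ v.1 ≤ x) +
      parity O (fun v => v ∈ symmDiff A B ∧ v.1 ≤ x + 1) =
        parity O fun v => (v.1 = x + 1 ∧ v.2 < y) ∧ v ∈ symmDiff A B := by
    rw [parity_add]
    refine parity_congr fun v hv => ?_
    have hne : v ≠ (x + 1, y) := fun h => hmem (h ▸ hv)
    simp only [ne_eq, Prod.ext_iff] at hne
    by_cases hvT : v ∈ symmDiff A B
    · have hdiag := hT v hvT
      simp only [hvT, Xor, true_and, and_true]
      omega
    · simp [hvT, Xor]
  have hleave := hσ.parity_leaving_add hτ hσO hτO fun v => v.1 = x + 1 ∧ v.2 < y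
  rw [← rayCrossings_add_rayCrossings hσ hσO hxy hmem,
    ← rayCrossings_add_rayCrossings hτ hτO hxy hmem, ← hends] at hleave
  rw [← sub_eq_zero, CharTwo.sub_eq_add] at hleave ⊢
  simp only [windingParity]
  linear_combination hleave

lemma windingParity_add_one_right (hmem : (x, y) ∉ O) (T : Set (ℤ × ℤ)) :
    windingParity O σ τ T (x, y + 1) = windingParity O σ τ T (x, y) := by
  simp only [windingParity, rayCrossings_succ hmem]

lemma windingParity_diagVertex (hσ : IsMatchingOn honeyGraph A σ) (hτ : IsMatchingOn honeyGraph B τ)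
    (T : Set (ℤ × ℤ)) (k : ℤ) :
    windingParity O σ τ T (diagVertex k) = parity O fun u => u ∈ T ∧ u.1 ≤ k := by
  simp only [windingParity, diagVertex, rayCrossings_diag hσ, rayCrossings_diag hτ, zero_add]

lemma windingParity_eq_of_honeyRel (hσ : IsMatchingOn honeyGraph A σ)
    (hτ : IsMatchingOn honeyGraph B τ) (hσO : ∀ v ∈ O, σ v ∈ O) (hτO : ∀ v ∈ O, τ v ∈ O)
    (hT : ∀ v ∈ symmDiff A B, v.1 = v.2) {v w : ℤ × ℤ} (hvw : honeyRel v w) (hv : v ∉ O)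
    (hw : w ∉ O) :
    windingParity O σ τ (symmDiff A B) w = windingParity O σ τ (symmDiff A B) v := by
  obtain ⟨x, y⟩ := v
  obtain ⟨x', y'⟩ := w
  simp only [honeyRel] at hvw
  rcases hvw with ⟨rfl, rfl, hle, k, hk⟩ | ⟨rfl, rfl, -⟩ | ⟨rfl, rfl, rfl⟩
  · refine windingParity_add_one_left hσ hτ hσO hτO hT (hle.lt_of_ne fun h => ?_) hw
    omega
  · exact windingParity_add_one_right hv _
  · rw [windingParity_add_one_left hσ hτ hσO hτO hT (lt_add_one x) hw,
      windingParity_add_one_right hv]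

lemma windingParity_eq_of_mem_pairOrbit (hσ : IsMatchingOn honeyGraph A σ)
    (hτ : IsMatchingOn honeyGraph B τ) (hσO : ∀ v ∈ O, σ v ∈ O) (hτO : ∀ v ∈ O, τ v ∈ O)
    (hT : ∀ v ∈ symmDiff A B, v.1 = v.2) {v w : ℤ × ℤ} (hv : v ∉ O) (hw : w ∈ pairOrbit σ τ v) :
    windingParity O σ τ (symmDiff A B) w = windingParity O σ τ (symmDiff A B) v := by
  have hadj {u u' : ℤ × ℤ} (hu : u ∉ O) (hu' : u' ∉ O) (h : honeyGraph.Adj u u') :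
      windingParity O σ τ (symmDiff A B) u' = windingParity O σ τ (symmDiff A B) u := by
    rcases honeyGraph_adj.1 h with h | h
    · exact windingParity_eq_of_honeyRel hσ hτ hσO hτO hT h hu hu'
    · exact (windingParity_eq_of_honeyRel hσ hτ hσO hτO hT h hu' hu).symm
  have hstep {C : Set (ℤ × ℤ)} {ρ : ℤ × ℤ → ℤ × ℤ} (hρ : IsMatchingOn honeyGraph C ρ)
      (hρO : ∀ u ∈ O, ρ u ∈ O) {u : ℤ × ℤ} (hu : u ∉ O) :
      ρ u ∉ O ∧ windingParity O σ τ (symmDiff A B) (ρ u) =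
        windingParity O σ τ (symmDiff A B) u := by
    have hρu : ρ u ∉ O := fun h => hu (hρ.involutive u ▸ hρO _ h)
    refine ⟨hρu, ?_⟩
    by_cases hfix : ρ u = u
    · rw [hfix]
    · exact hadj hu hρu (hρ.adj_of_ne hfix)
  refine (pairOrbit_subset (O := {u | u ∉ O ∧ windingParity O σ τ (symmDiff A B) u =
    windingParity O σ τ (symmDiff A B) v}) ⟨hv, rfl⟩ ?_ ?_ hw).2
  · exact fun u hu => (hstep hσ hσO hu.1).imp_right fun h => h.trans hu.2
  · exact fun u hu => (hstep hτ hτO hu.1).imp_right fun h => h.trans hu.2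

theorem noncrossing_honeyGraph {a b c d : ℤ} (hab : a < b) (hbc : b < c) (hcd : c < d) :
    Noncrossing honeyGraph (diagVertex a) (diagVertex b) (diagVertex c) (diagVertex d) := by
  intro A B σ τ hA hB hσ hτ hAB hdb
  have hfin := finite_pairOrbit (a := diagVertex a) hA hB hσ hτ
  have hσO : ∀ v ∈ hfin.toFinset, σ v ∈ hfin.toFinset := by
    simpa only [Set.Finite.mem_toFinset] using fun _ => map_left_mem_pairOrbit
  have hτO : ∀ v ∈ hfin.toFinset, τ v ∈ hfin.toFinset := by
    simpa only [Set.Finite.mem_toFinset] using fun _ => map_right_mem_pairOrbit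
  have hmem (v : ℤ × ℤ) : v ∈ symmDiff A B ↔
      v = diagVertex a ∨ v = diagVertex b ∨ v = diagVertex c ∨ v = diagVertex d := by
    simp only [hAB, Set.mem_insert_iff, Set.mem_singleton_iff]
  have hfixed {k : ℤ} (hk : diagVertex k ∈ symmDiff A B) := fixed_of_mem_symmDiff hσ hτ hk
  have hb : diagVertex b ∉ hfin.toFinset := fun hb => by
    rw [Set.Finite.mem_toFinset] at hb
    exact (hbc.trans hcd).ne (diagVertex_injective (eq_of_mem_pairOrbit hσ.involutive hτ.involutive
      (hfixed ((hmem _).2 (by simp))) hb (pairOrbit_subset_of_mem hb hdb)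
      (diagVertex_injective.ne (by omega)) (diagVertex_injective.ne (by omega))
      (hfixed ((hmem _).2 (by simp))) (hfixed ((hmem _).2 (by simp)))))
  have hwinding := windingParity_eq_of_mem_pairOrbit hσ hτ hσO hτO (fun v hv => by
    rcases (hmem v).1 hv with rfl | rfl | rfl | rfl <;> rfl) hb hdb
  have hends : parity hfin.toFinset (fun v => v ∈ symmDiff A B ∧ v.1 ≤ d) = 0 := by
    refine (parity_congr fun v _ => and_iff_left_of_imp fun hv => ?_).trans
      (hσ.parity_symmDiff hτ hσO hτO)
    rcases (hmem v).1 hv with rfl | rfl | rfl | rfl <;> dsimp only [diagVertex] <;> omega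
  rw [windingParity_diagVertex hσ hτ, windingParity_diagVertex hσ hτ, hends,
    parity_eq_one (a := diagVertex a)] at hwinding
  · exact absurd hwinding (by decide)
  · simpa using self_mem_pairOrbit σ τ _
  · intro v hv
    refine ⟨fun h => ?_, fun h => ⟨(hmem v).2 (.inl h), ?_⟩⟩
    · rcases (hmem v).1 h.1 with rfl | rfl | rfl | rfl
      · rfl
      · exact absurd hv hb
      all_goals exact absurd h.2 (by dsimp only [diagVertex]; omega)
    · rw [h]
      exact hab.le

end Honeycomb

section Switching

variable {α : Type*} {G : SimpleGraph α} {W I J N : Set α} {σ : α → α} {a b c : α}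

/-- The subgraph of `G` in which the edges at `c` are those that lead to `N`. -/
def restrictAt (G : SimpleGraph α) (c : α) (N : Set α) : SimpleGraph α where
  Adj v w := G.Adj v w ∧ (v = c → w ∈ N) ∧ (w = c → v ∈ N)
  symm := ⟨fun _ _ h => ⟨h.1.symm, h.2.2, h.2.1⟩⟩
  loopless := ⟨fun _ h => G.irrefl h.1⟩

lemma isMatchingOn_restrictAt :
    IsMatchingOn (restrictAt G c N) W σ ↔ IsMatchingOn G W σ ∧ (c ∈ W → σ c ∈ N) := by
  refine ⟨fun h => ⟨⟨h.involutive, fun v hv => (h.adj v hv).1, h.eq_self⟩,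
    fun hc => (h.adj c hc).2.1 rfl⟩, fun ⟨h, hc⟩ => ⟨h.involutive, fun v hv => ?_, h.eq_self⟩⟩
  refine ⟨h.adj v hv, fun hvc => hvc ▸ hc (hvc ▸ hv), fun hvc => ?_⟩
  rw [← h.involutive v, hvc]
  exact hc (hvc ▸ h.map_mem_iff.2 hv)

lemma matchNum_restrictAt (h : c ∈ W → ∀ v ∈ W, G.Adj c v → v ∈ N) :
    matchNum (restrictAt G c N) W = matchNum G W := by
  refine congrArg Set.ncard (Set.ext fun σ => isMatchingOn_restrictAt.trans
    (and_iff_left_of_imp fun hσ hc => ?_))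
  exact h hc _ (hσ.map_mem_iff.2 hc) (hσ.adj c hc)

lemma matchNum_eq_add_matchNum_restrictAt (hW : W.Finite) (hc : c ∈ W) (N : Set α) :
    matchNum G W = matchNum (restrictAt G c N) W + matchNum (restrictAt G c Nᶜ) W := by
  simp only [matchNum, isMatchingOn_restrictAt, hc, true_imp_iff]
  have hfin (P : (α → α) → Prop) : {σ | IsMatchingOn G W σ ∧ P σ}.Finite :=
    (finite_setOf_isMatchingOn hW).subset fun _ h => h.1
  refine Eq.trans ?_
    (Set.ncard_union_eq (Set.disjoint_left.2 fun _ h h' => h'.2 h.2) (hfin _) (hfin _))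
  refine congrArg Set.ncard (Set.ext fun σ => ?_)
  by_cases hσ : σ c ∈ N <;> simp [hσ]

/-- Inserting or deleting both `a` and `b` does not change the number of matchings, as long as the
vertices of `I` are to be covered. -/
def Switchable (G : SimpleGraph α) (I : Set α) (a b : α) : Prop :=
  ∀ ⦃W : Set α⦄, W.Finite → I ⊆ W → matchNum G W = matchNum G (symmDiff W {a, b})

lemma Switchable.matchNum_eq_add (hleft : Switchable (restrictAt G c N) I a c)
    (hright : Switchable (restrictAt G c Nᶜ) J c b) (hW : W.Finite)
    (hI : I ⊆ W) (hJ : J ⊆ W) (hc : c ∈ W) :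
    matchNum G W = matchNum G (symmDiff W {a, c}) + matchNum G (symmDiff W {c, b}) := by
  rw [matchNum_eq_add_matchNum_restrictAt hW hc N, hleft hW hI, hright hW hJ,
    matchNum_restrictAt, matchNum_restrictAt] <;>
  simp [Set.mem_symmDiff, hc]

lemma Switchable.series (hleft : Switchable (restrictAt G c N) I a c)
    (hright : Switchable (restrictAt G c Nᶜ) J c b) (hab : a ≠ b) (hac : a ≠ c) (hbc : b ≠ c)
    (hI : Disjoint I {a, b}) (hJ : Disjoint J {a, b}) :
    Switchable G (insert c (I ∪ J)) a b := by
  intro W hW hsub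
  obtain ⟨hcW, hIW, hJW⟩ : c ∈ W ∧ I ⊆ W ∧ J ⊆ W := by
    rwa [Set.insert_subset_iff, Set.union_subset_iff] at hsub
  have hswitch {T : Set α} (hTW : T ⊆ W) (hT : Disjoint T {a, b}) : T ⊆ symmDiff W {a, b} :=
    fun v hv => .inl ⟨hTW hv, Set.disjoint_left.1 hT hv⟩
  have ha : symmDiff {a, b} {a, c} = ({c, b} : Set α) := by grind
  have hb : symmDiff {a, b} {c, b} = ({a, c} : Set α) := by grind
  rw [hleft.matchNum_eq_add hright hW hIW hJW hcW,
    hleft.matchNum_eq_add hright (hW.symmDiff (Set.toFinite _)) (hswitch hIW hI)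
      (hswitch hJW hJ) (.inl ⟨hcW, by simp [hac.symm, hbc.symm]⟩),
    symmDiff_assoc, symmDiff_assoc, ha, hb, add_comm]

open Classical in
/-- Exchanges two vertices that have the same neighbours, apart from each other. -/
noncomputable def twinSwap (h : ∀ v, v ≠ a → v ≠ b → (G.Adj a v ↔ G.Adj b v)) : G ≃g G where
  toEquiv := Equiv.swap a b
  map_rel_iff' {v w} := by
    have := G.adj_comm
    have := G.irrefl (v := a)
    have := G.irrefl (v := b)
    simp only [Equiv.swap_apply_def]
    grind

lemma matchNum_symmDiff_of_twin (h : ∀ v, v ≠ a → v ≠ b → (G.Adj a v ↔ G.Adj b v))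
    (hW : ¬(a ∈ W ↔ b ∈ W)) : matchNum G (symmDiff W {a, b}) = matchNum G W := by
  classical
  rw [← matchNum_preimage (twinSwap h) W]
  congr 1
  ext v
  change _ ↔ Equiv.swap a b v ∈ W
  simp only [Set.mem_symmDiff, Set.mem_insert_iff, Set.mem_singleton_iff, Equiv.swap_apply_def]
  grind

lemma switchable_of_triangle (ha : ∀ v, G.Adj a v ↔ v = b ∨ v = c)
    (hb : ∀ v, G.Adj b v ↔ v = a ∨ v = c) : Switchable G ∅ a b := by
  have hab : G.Adj a b := (ha b).2 (.inl rfl)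
  have hforced {W : Set α} (haW : a ∈ W) (hbW : b ∈ W) :
      matchNum G W = matchNum G (W \ {a, b}) := by
    refine matchNum_eq_sdiff_pair haW hbW hab fun σ hσ => ?_
    by_contra hne
    have hσa : σ a = c := ((ha _).1 (hσ.adj a haW)).resolve_left hne
    rcases (hb _).1 (hσ.adj b hbW) with hσb | hσb
    · exact hne (hσb ▸ hσ.involutive b)
    · exact hab.ne (hσ.involutive.injective (hσa.trans hσb.symm))
  intro W _ _
  by_cases hW : a ∈ W ↔ b ∈ W
  · by_cases haW : a ∈ W
    · rw [hforced haW (hW.1 haW), symmDiff_of_ge]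
      exact Set.pair_subset haW (hW.1 haW)
    · have hdisj : Disjoint W {a, b} := by simp [haW, hW.not.1 haW]
      have hunion : symmDiff W {a, b} = W ∪ {a, b} := hdisj.symmDiff_eq_sup
      rw [hunion, hforced (W := W ∪ {a, b}) (.inr (.inl rfl)) (.inr (.inr rfl)),
        Set.union_sdiff_right, hdisj.sdiff_eq_left]
  · exact (matchNum_symmDiff_of_twin (fun v hva hvb => by rw [ha, hb]; simp [hva, hvb]) hW).symm

end Switching

section TriangleStrip

variable {G : SimpleGraph (ℤ × ℤ)} {W : Set (ℤ × ℤ)} {p q r : ℤ}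

/-- The neighbours of `diagVertex k` in the triangle to its left. -/
def leftNbrs (k : ℤ) : Set (ℤ × ℤ) := {diagVertex (k - 1), (k - 1, k)}

/-- The neighbours of `diagVertex k` in the triangle to its right. -/
def rightNbrs (k : ℤ) : Set (ℤ × ℤ) := {diagVertex (k + 1), (k, k + 1)}

/-- The diagonal vertices from `p` to `q` have the same neighbours as in the chain of triangles with
vertices `(k, k)`, `(k, k + 1)`, `(k + 1, k + 1)` for `p ≤ k < q`. -/
def IsTriangleStrip (G : SimpleGraph (ℤ × ℤ)) (p q : ℤ) : Prop :=
  ∀ k, p ≤ k → k ≤ q → ∀ v, G.Adj (diagVertex k) v ↔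
    (p < k ∧ v ∈ leftNbrs k) ∨ (k < q ∧ v ∈ rightNbrs k)

lemma mem_leftNbrs {k : ℤ} {v : ℤ × ℤ} :
    v ∈ leftNbrs k ↔ (v.1 = k - 1 ∧ v.2 = k - 1) ∨ (v.1 = k - 1 ∧ v.2 = k) := by
  simp only [leftNbrs, diagVertex, Set.mem_insert_iff, Set.mem_singleton_iff, Prod.ext_iff]

lemma mem_rightNbrs {k : ℤ} {v : ℤ × ℤ} :
    v ∈ rightNbrs k ↔ (v.1 = k + 1 ∧ v.2 = k + 1) ∨ (v.1 = k ∧ v.2 = k + 1) := by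
  simp only [rightNbrs, diagVertex, Set.mem_insert_iff, Set.mem_singleton_iff, Prod.ext_iff]

lemma honeyGraph_adj_diagVertex {k : ℤ} {v : ℤ × ℤ} :
    honeyGraph.Adj (diagVertex k) v ↔ v ∈ leftNbrs k ∨ v ∈ rightNbrs k := by
  simp only [honeyGraph_adj, honeyRel, diagVertex, mem_leftNbrs, mem_rightNbrs]
  grind

namespace IsTriangleStrip

lemma restrictAt_left (hG : IsTriangleStrip G p r) (hqr : q ≤ r) :
    IsTriangleStrip (restrictAt G (diagVertex q) (leftNbrs q)) p q := by
  intro k hpk hkq v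
  simp only [restrictAt, hG k hpk (hkq.trans hqr), diagVertex_injective.eq_iff]
  simp only [mem_leftNbrs, mem_rightNbrs, diagVertex, Prod.ext_iff]
  omega

lemma restrictAt_right (hG : IsTriangleStrip G p r) (hpq : p ≤ q) :
    IsTriangleStrip (restrictAt G (diagVertex q) (leftNbrs q)ᶜ) q r := by
  intro k hqk hkr v
  simp only [restrictAt, hG k (hpq.trans hqk) hkr, diagVertex_injective.eq_iff,
    Set.mem_compl_iff]
  simp only [mem_leftNbrs, mem_rightNbrs, diagVertex, Prod.ext_iff]
  rcases hqk.eq_or_lt with rfl | hlt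
  · simp only [forall_const, not_or, not_and, and_imp, lt_self_iff_false, false_and, false_or]
    omega
  · simp only [hlt, hlt.ne', hpq.trans_lt hlt, false_imp_iff, true_and]
    omega

lemma switchable_add_one (hG : IsTriangleStrip G p (p + 1)) :
    Switchable G ∅ (diagVertex p) (diagVertex (p + 1)) := by
  refine switchable_of_triangle (c := (p, p + 1)) (fun v => ?_) fun v => ?_
  · rw [hG p le_rfl (by omega)]
    simp [rightNbrs]
  · rw [hG (p + 1) (by omega) le_rfl]
    simp [leftNbrs]

theorem switchable (hG : IsTriangleStrip G p q) (hpq : p < q) :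
    Switchable G (diagVertex '' Set.Ioo p q) (diagVertex p) (diagVertex q) := by
  induction q, hpq using Int.leInduction generalizing G with
  | base => simpa [Set.Ioo_add_one_right_eq_Ioc] using hG.switchable_add_one
  | succ q hpq ih =>
    have hseries := (ih (hG.restrictAt_left (by omega))).series
      (hG.restrictAt_right (by omega)).switchable_add_one
    have hI : insert (diagVertex q) (diagVertex '' Set.Ioo p q ∪ ∅) =
        diagVertex '' Set.Ioo p (q + 1) := by
      rw [Set.union_empty, ← Set.image_insert_eq, Set.Ioo_insert_right (by omega),
        Set.Ioo_add_one_right_eq_Ioc]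
    rw [hI] at hseries
    refine hseries ?_ ?_ ?_ ?_ (Set.empty_disjoint _) <;> simp [diagVertex_injective.eq_iff] <;>
      omega

theorem matchNum_eq_add (hG : IsTriangleStrip G p r) (hpq : p < q) (hqr : q < r) (hW : W.Finite)
    (hdiag : ∀ k, p < k → k < r → diagVertex k ∈ W) :
    matchNum G W = matchNum G (symmDiff W {diagVertex p, diagVertex q}) +
      matchNum G (symmDiff W {diagVertex q, diagVertex r}) := by
  refine ((hG.restrictAt_left hqr.le).switchable hpq).matchNum_eq_add
    ((hG.restrictAt_right hpq.le).switchable hqr) hW ?_ ?_ (hdiag q hpq hqr)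
  · rintro _ ⟨k, hk, rfl⟩
    exact hdiag k hk.1 (hk.2.trans hqr)
  · rintro _ ⟨k, hk, rfl⟩
    exact hdiag k (hpq.trans hk.1) hk.2

end IsTriangleStrip

lemma isTriangleStrip_honeyGraph (p r : ℤ) : IsTriangleStrip (restrictAt (restrictAt honeyGraph
    (diagVertex p) (rightNbrs p)) (diagVertex r) (leftNbrs r)) p r := by
  intro k hpk hkr v
  simp only [restrictAt, honeyGraph_adj_diagVertex, diagVertex_injective.eq_iff]
  simp only [mem_leftNbrs, mem_rightNbrs, diagVertex, Prod.ext_iff]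
  omega

lemma matchNum_restrictAt_honeyGraph (hleft : ∀ v ∈ W, p ≤ v.1) (hright : ∀ v ∈ W, v.1 ≤ r)
    (htop : (r, r + 1) ∉ W) :
    matchNum (restrictAt (restrictAt honeyGraph (diagVertex p) (rightNbrs p)) (diagVertex r)
      (leftNbrs r)) W = matchNum honeyGraph W := by
  rw [matchNum_restrictAt fun _ v hv h => ?_, matchNum_restrictAt fun _ v hv h => ?_]
  · refine (honeyGraph_adj_diagVertex.1 h).resolve_left fun h => ?_
    have := hleft v hv
    rw [mem_leftNbrs] at h
    omega
  · refine (honeyGraph_adj_diagVertex.1 h.1).resolve_right fun h => ?_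
    rcases h with rfl | rfl
    · exact absurd (hright _ hv) (by simp [diagVertex])
    · exact htop hv

theorem matchNum_honeyGraph_eq_add (hW : W.Finite) (hpq : p < q) (hqr : q < r)
    (hdiag : ∀ k, p < k → k < r → diagVertex k ∈ W) (hleft : ∀ v ∈ W, p ≤ v.1)
    (hright : ∀ v ∈ W, v.1 ≤ r) (htop : (r, r + 1) ∉ W) :
    matchNum honeyGraph W = matchNum honeyGraph (symmDiff W {diagVertex p, diagVertex q}) +
      matchNum honeyGraph (symmDiff W {diagVertex q, diagVertex r}) := by
  have hbounds {S : Set (ℤ × ℤ)} (hS : ∀ v ∈ S, p ≤ v.1 ∧ v.1 ≤ r ∧ v.1 = v.2) :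
      (∀ v ∈ symmDiff W S, p ≤ v.1) ∧ (∀ v ∈ symmDiff W S, v.1 ≤ r) ∧
        (r, r + 1) ∉ symmDiff W S := by
    refine ⟨fun v hv => ?_, fun v hv => ?_, fun h => ?_⟩
    · exact hv.elim (fun h => hleft v h.1) fun h => (hS v h.1).1
    · exact hv.elim (fun h => hright v h.1) fun h => (hS v h.1).2.1
    · exact h.elim (fun h => htop h.1) fun h => by simpa using (hS _ h.1).2.2
  have hpq' := hbounds (S := {diagVertex p, diagVertex q})
    (by rintro v (rfl | rfl) <;> simp only [diagVertex, and_true] <;> omega)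
  have hqr' := hbounds (S := {diagVertex q, diagVertex r})
    (by rintro v (rfl | rfl) <;> simp only [diagVertex, and_true] <;> omega)
  have hadd := (isTriangleStrip_honeyGraph p r).matchNum_eq_add hpq hqr hW hdiag
  rwa [matchNum_restrictAt_honeyGraph hleft hright htop,
    matchNum_restrictAt_honeyGraph hpq'.1 hpq'.2.1 hpq'.2.2,
    matchNum_restrictAt_honeyGraph hqr'.1 hqr'.2.1 hqr'.2.2] at hadd

end TriangleStrip

section Recurrence

variable {W : Set (ℤ × ℤ)} {S : Set ℤ}

lemma matchNum_honeyGraph_eq_of_column_zero {a : ℤ} (ha : 0 ≤ a) (p : ℕ) (h11 : (1, 1) ∉ W)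
    (hW : ∀ x y : ℤ, x ≤ 0 → ((x, y) ∈ W ↔ x = 0 ∧ 2 * a ≤ y ∧ y < 2 * a + 2 * p)) :
    matchNum honeyGraph W = matchNum honeyGraph {v ∈ W | 1 ≤ v.1} := by
  induction p generalizing W a with
  | zero =>
    congr 1
    ext ⟨x, y⟩
    have := hW x y
    rw [Set.mem_sep_iff]
    grind
  | succ p ih =>
    rw [matchNum_eq_sdiff_pair_of_unique_adj (a := (0, 2 * a)) (b := (0, 2 * a + 1)),
      ih (a := a + 1) (by omega) fun h => h11 h.1]
    · congr 1
      ext ⟨x, y⟩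
      simp only [Set.mem_sep_iff, Set.mem_sdiff, Set.mem_insert_iff, Set.mem_singleton_iff]
      grind
    · intro x y hx
      simp only [Set.mem_sdiff, hW x y hx, Set.mem_insert_iff, Set.mem_singleton_iff, Prod.mk.injEq]
      omega
    · rw [hW _ _ le_rfl]
      omega
    · rw [hW _ _ le_rfl]
      omega
    · rintro ⟨x, y⟩ hv
      have hcolumn : x ≤ 0 → _ := fun hx => (hW x y hx).1 hv
      have hne : ¬(x = 1 ∧ y = 1) := fun h => h11 (by rwa [h.1, h.2] at hv)
      simp only [honeyGraph_adj, honeyRel, Prod.mk.injEq, Int.odd_iff]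
      omega

lemma matchNum_honeyGraph_eq_of_column_one (q : ℕ)
    (hW : ∀ x y : ℤ, x ≤ 1 → ((x, y) ∈ W ↔ x = 1 ∧ 2 ≤ y ∧ y < 2 * q + 2)) :
    matchNum honeyGraph W = matchNum honeyGraph {v ∈ W | 2 ≤ v.1} := by
  induction q generalizing W with
  | zero =>
    congr 1
    ext ⟨x, y⟩
    have := hW x y
    rw [Set.mem_sep_iff]
    grind
  | succ q ih =>
    rw [matchNum_eq_sdiff_pair_of_unique_adj (a := ((1, 2 * q + 3) : ℤ × ℤ))
      (b := (1, 2 * q + 2)), ih]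
    · congr 1
      ext ⟨x, y⟩
      simp only [Set.mem_sep_iff, Set.mem_sdiff, Set.mem_insert_iff, Set.mem_singleton_iff]
      grind
    · intro x y hx
      simp only [Set.mem_sdiff, hW x y hx, Set.mem_insert_iff, Set.mem_singleton_iff, Prod.mk.injEq]
      omega
    · rw [hW _ _ le_rfl]
      omega
    · rw [hW _ _ le_rfl]
      omega
    · rintro ⟨x, y⟩ hv
      have hcolumn : x ≤ 1 → _ := fun hx => (hW x y hx).1 hv
      simp only [honeyGraph_adj, honeyRel, Prod.mk.injEq, Int.odd_iff]
      omega

lemma honeyRel_add_two {v w : ℤ × ℤ} : honeyRel (v + (2, 2)) (w + (2, 2)) ↔ honeyRel v w := by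
  simp only [honeyRel, Prod.fst_add, Prod.snd_add, Int.odd_iff]
  refine or_congr ?_ (or_congr ?_ ?_) <;> omega

/-- The translation of the honeycomb graph by `(2, 2)`. -/
def honeyShift : honeyGraph ≃g honeyGraph where
  toEquiv := Equiv.addRight (2, 2)
  map_rel_iff' := or_congr honeyRel_add_two honeyRel_add_two

/-- The vertices of `G_n` other than `(2n, 2n + 1)`, and also without `(2n, 2n)` if `n` is even:
for even `n` these two vertices can only be matched with each other. -/
def coreVertices (n : ℕ) : Set (ℤ × ℤ) :=
  {x | 0 ≤ x.1 ∧ x.1 ≤ 2 * (n : ℤ) ∧ x.1 ≤ x.2 ∧ x.2 ≤ 2 * (n : ℤ) + 1 ∧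
    ¬(x.1 = 2 * (n : ℤ) ∧ (x.2 = 2 * (n : ℤ) + 1 ∨ n % 2 = 0))}

lemma finite_coreVertices (n : ℕ) : (coreVertices n).Finite :=
  ((Set.finite_Icc (0 : ℤ) (2 * n)).prod (Set.finite_Icc (0 : ℤ) (2 * n + 1))).subset
    fun _ h => ⟨⟨h.1, h.2.1⟩, h.1.trans h.2.2.1, h.2.2.2.1⟩

/-- The number of perfect matchings of the core of `G_n` after the diagonal vertices with
coordinates in `S` have been removed, or adjoined if they are not in the core. -/
noncomputable def coreNum (n : ℕ) (S : Set ℤ) : ℕ :=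
  matchNum honeyGraph (symmDiff (coreVertices n) (diagVertex '' S))

lemma mk_mem_image_diagVertex {x y : ℤ} : (x, y) ∈ diagVertex '' S ↔ x ∈ S ∧ x = y := by
  simp only [Set.mem_image, diagVertex, Prod.mk.injEq]
  grind

lemma coreNum_empty (n : ℕ) : coreNum n ∅ = matchNum honeyGraph (coreVertices n) := by
  rw [coreNum, Set.image_empty, ← Set.bot_eq_empty, symmDiff_bot]

lemma coreNum_zero : coreNum 0 ∅ = 1 := by
  have hcore : coreVertices 0 = ∅ := Set.eq_empty_of_forall_notMem
    fun v ⟨h0, h1, _, _, h⟩ => h ⟨h1.antisymm h0, Or.inr rfl⟩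
  rw [coreNum_empty, hcore, matchNum_empty]

lemma Zpm_eq_matchNum (n : ℕ) (U : Set (ℤ × ℤ)) :
    Zpm n U = matchNum honeyGraph (Vset n \ U) := by
  have hedge : ∀ x y, memV n x → memV n y → (edgeRel n x y ↔ honeyRel x y) := by
    rintro ⟨x₁, x₂⟩ ⟨y₁, y₂⟩ hx hy
    simp only [memV] at hx hy
    simp only [edgeRel, honeyRel, Int.odd_iff]
    refine or_congr ?_ (or_congr ?_ ?_) <;> omega
  rw [Zpm, card_isPerfectMatching_induce]
  exact matchNum_congr fun x hx y hy =>
    or_congr (hedge x y hx.1 hy.1) (hedge y x hy.1 hx.1)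

lemma symmDiff_coreVertices_eq_sdiff {n : ℕ} (hS : ∀ k ∈ S, 0 ≤ k ∧ k < 2 * (n : ℤ)) :
    symmDiff (coreVertices n) (diagVertex '' S) = coreVertices n \ diagVertex '' S := by
  refine symmDiff_of_ge (Set.image_subset_iff.2 fun k hk => ?_)
  simp only [Set.mem_preimage, coreVertices, diagVertex, Set.mem_ofPred_eq]
  have := hS k hk
  omega

lemma matchNum_Vset_sdiff {n : ℕ} (hS : ∀ k ∈ S, k < 2 * (n : ℤ)) :
    matchNum honeyGraph (Vset n \ diagVertex '' S) =
      matchNum honeyGraph (coreVertices n \ diagVertex '' S) := by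
  have hmem (x y : ℤ) : (x, y) ∈ Vset n \ diagVertex '' S ↔
      memV n (x, y) ∧ ¬(x ∈ S ∧ x = y) := by
    rw [Set.mem_sdiff, mk_mem_image_diagVertex]
    rfl
  rcases Nat.mod_two_eq_zero_or_one n with hn | hn
  · rw [matchNum_eq_sdiff_pair_of_unique_adj (a := (2 * (n : ℤ), 2 * (n : ℤ) + 1))
      (b := (2 * (n : ℤ), 2 * (n : ℤ)))]
    · congr 1
      ext ⟨x, y⟩
      rw [Set.mem_sdiff, hmem, Set.mem_sdiff, mk_mem_image_diagVertex]
      simp only [memV, coreVertices, Set.mem_ofPred_eq, Set.mem_insert_iff, Set.mem_singleton_iff,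
        Prod.mk.injEq]
      grind
    · rw [hmem, memV]
      omega
    · have := hS (2 * n)
      rw [hmem, memV]
      grind
    · rintro ⟨x, y⟩ hv
      rw [hmem, memV] at hv
      simp only [honeyGraph_adj, honeyRel, Prod.mk.injEq, Int.odd_iff]
      omega
  · have hV : Vset n = coreVertices n := by
      ext ⟨x, y⟩
      simp only [Vset, memV, coreVertices, Set.mem_ofPred_eq]
      omega
    rw [hV]

lemma Zpm_eq_coreNum (n : ℕ) (hS : ∀ k ∈ S, 0 ≤ k ∧ k < 2 * (n : ℤ)) :
    Zpm n (diagVertex '' S) = coreNum n S := by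
  rw [Zpm_eq_matchNum, coreNum, symmDiff_coreVertices_eq_sdiff hS,
    matchNum_Vset_sdiff fun k hk => (hS k hk).2]

lemma Zpm_bvertex_eq_coreNum (n : ℕ) {j : ℤ} (h0 : 0 ≤ j) (hj : j < 2 * (n : ℤ)) :
    Zpm n {(j, j), bvertex n} = coreNum n {j, 2 * (n : ℤ)} := by
  rw [Zpm_eq_matchNum, coreNum]
  congr 1
  ext ⟨x, y⟩
  simp only [Vset, memV, coreVertices, bvertex, Set.mem_symmDiff, Set.mem_sdiff,
    mk_mem_image_diagVertex, Set.mem_insert_iff, Set.mem_singleton_iff, Set.mem_ofPred_eq,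
    Prod.mk.injEq]
  omega

lemma mk_mem_symmDiff_coreVertices_succ (n : ℕ) (hS : ∀ k ∈ S, 0 ≤ k) (x y : ℤ) :
    (x, y) ∈ symmDiff (coreVertices (n + 1))
        (diagVertex '' symmDiff {1, 2 * (n : ℤ) + 2} ((· + 2) '' S)) ↔
      if x ≤ 1 then 0 ≤ x ∧ x ≤ y ∧ y < 2 * n + 4 ∧ ¬(x = 1 ∧ y = 1)
      else (x - 2, y - 2) ∈ symmDiff (coreVertices n) (diagVertex '' S) := by
  have hnonneg := hS (x - 2)
  have himage : x ∈ (· + 2) '' S ↔ x - 2 ∈ S := by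
    rw [Set.image_add_right, Set.mem_preimage, sub_eq_add_neg]
  simp only [Set.mem_symmDiff, mk_mem_image_diagVertex, himage, coreVertices, Set.mem_ofPred_eq,
    Set.mem_insert_iff, Set.mem_singleton_iff]
  push_cast
  by_cases hx : x ≤ 1 <;> by_cases hxS : x - 2 ∈ S <;>
    simp only [hx, hxS, if_true, if_false, true_and, false_and, and_true, and_false, false_or,
      or_false, not_true_eq_false, not_false_eq_true, true_imp_iff] at hnonneg ⊢ <;>
    omega

-- Without `(1, 1)` the first two columns can be matched in only one way, and the rest of the core
-- of `G_{n+1}` is a copy of the core of `G_n`, up to the vertex `(2n + 2, 2n + 2)`.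
theorem coreNum_succ (n : ℕ) (hS : ∀ k ∈ S, 0 ≤ k) :
    coreNum (n + 1) (symmDiff {1, 2 * (n : ℤ) + 2} ((· + 2) '' S)) = coreNum n S := by
  have hmem := mk_mem_symmDiff_coreVertices_succ n hS
  rw [coreNum, matchNum_honeyGraph_eq_of_column_zero le_rfl (n + 2),
    matchNum_honeyGraph_eq_of_column_one (n + 1), ← matchNum_preimage honeyShift, coreNum]
  · congr 1
    ext ⟨x, y⟩
    have hshift : honeyShift (x, y) = (x + 2, y + 2) := rfl
    have hx : (x, y) ∈ symmDiff (coreVertices n) (diagVertex '' S) → 0 ≤ x := by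
      rw [Set.mem_symmDiff, mk_mem_image_diagVertex]
      exact fun h => h.elim (fun h => h.1.1) fun h => hS x h.1.1
    simp only [Set.mem_preimage, hshift, Set.mem_sep_iff, hmem]
    grind
  · intro x y hx
    rw [Set.mem_sep_iff, hmem, if_pos hx]
    push_cast
    omega
  · rw [hmem]
    simp
  · intro x y hx
    rw [hmem, if_pos (by omega)]
    push_cast
    omega

lemma coreNum_empty_eq_add (n : ℕ) {j : ℤ} (h0 : 0 < j) (hj : j < 2 * (n : ℤ)) :
    coreNum n ∅ = coreNum n {0, j} + coreNum n {j, 2 * (n : ℤ)} := by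
  rw [coreNum_empty, coreNum, coreNum, Set.image_pair, Set.image_pair]
  refine matchNum_honeyGraph_eq_add (finite_coreVertices n) h0 hj (fun k hk hk' => ?_)
    (fun v hv => hv.1) (fun v hv => hv.2.1) fun h => h.2.2.2.2 ⟨rfl, Or.inl rfl⟩
  exact ⟨hk.le, hk'.le, le_rfl, by simp only [diagVertex]; omega, fun h => hk'.ne h.1⟩

lemma coreNum_condensation (n : ℕ) {i j : ℤ} (hi : 1 < i) (hij : i < j) (hj : j < 2 * (n : ℤ)) :
    coreNum n ∅ * coreNum n {1, i, j, 2 * (n : ℤ)} +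
        coreNum n {1, j} * coreNum n {i, 2 * (n : ℤ)} =
      coreNum n {1, i} * coreNum n {j, 2 * (n : ℤ)} +
        coreNum n {1, 2 * (n : ℤ)} * coreNum n {i, j} := by
  rw [coreNum_empty]
  simp only [coreNum, Set.image_insert_eq, Set.image_singleton]
  refine kuo_condensation (finite_coreVertices n) ?_ (noncrossing_honeyGraph hi hij hj)
  simp only [List.nodup_cons, List.mem_cons, diagVertex_injective.eq_iff, List.not_mem_nil,
    List.nodup_nil, or_false, not_false_eq_true, and_true]
  omega

lemma coreNum_succ_one_top (n : ℕ) : coreNum (n + 1) {1, 2 * (n : ℤ) + 2} = coreNum n ∅ := by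
  rw [← coreNum_succ n (S := ∅) (by simp), Set.image_empty, ← Set.bot_eq_empty, symmDiff_bot]

lemma coreNum_succ_pair (n : ℕ) {j : ℤ} (h0 : 0 ≤ j) (hj : j < 2 * (n : ℤ)) :
    coreNum (n + 1) {1, j + 2} = coreNum n {j, 2 * (n : ℤ)} := by
  rw [← coreNum_succ n (S := {j, 2 * (n : ℤ)}) (by rintro k (rfl | rfl) <;> omega), Set.image_pair]
  congr 1
  grind

lemma coreNum_succ_quadruple (n : ℕ) {i j : ℤ} (h0 : 0 ≤ i) (hij : i < j) (hj : j < 2 * (n : ℤ)) :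
    coreNum (n + 1) {1, i + 2, j + 2, 2 * (n : ℤ) + 2} = coreNum n {i, j} := by
  rw [← coreNum_succ n (S := {i, j}) (by rintro k (rfl | rfl) <;> omega), Set.image_pair]
  congr 1
  grind

lemma coreNum_empty_pos (n : ℕ) : 0 < coreNum n ∅ := by
  induction n with
  | zero => rw [coreNum_zero]; exact one_pos
  | succ n ih =>
    rw [coreNum_empty_eq_add (n + 1) one_pos (by omega), Nat.cast_succ, mul_add_one,
      coreNum_succ_one_top]
    omega

lemma Zpm_empty (n : ℕ) : Zpm n ∅ = coreNum n ∅ := by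
  rw [← Zpm_eq_coreNum n (by simp), Set.image_empty]

lemma gb_eq (n : ℕ) {j : ℕ} (hj : j < 2 * n) :
    gb n j = coreNum n {(j : ℤ), 2 * (n : ℤ)} / coreNum n ∅ := by
  rw [gb, Zpm_bvertex_eq_coreNum n (by omega) (by omega), Zpm_empty]

lemma gfn_eq (n : ℕ) {i j : ℕ} (hi : i < 2 * n) (hj : j < 2 * n) :
    gfn n i j = coreNum n {(i : ℤ), (j : ℤ)} / coreNum n ∅ := by
  have hpair : {((i : ℤ), (i : ℤ)), ((j : ℤ), (j : ℤ))} = diagVertex '' {(i : ℤ), (j : ℤ)} :=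
    (Set.image_pair diagVertex i j).symm
  rw [gfn, Zpm_empty, hpair, Zpm_eq_coreNum n (by rintro k (rfl | rfl) <;> omega)]

lemma coreNum_empty_ne_zero (n : ℕ) : (coreNum n ∅ : ℚ) ≠ 0 :=
  Nat.cast_ne_zero.2 (coreNum_empty_pos n).ne'

theorem gfn_zero_left {n j : ℕ} (h0 : 0 < j) (hj : j < 2 * n) : gfn n 0 j = 1 - gb n j := by
  have hadd : (coreNum n ∅ : ℚ) = _ := congrArg Nat.cast
    (coreNum_empty_eq_add n (j := j) (by omega) (by omega))
  rw [gfn_eq n (by omega) hj, gb_eq n hj, eq_sub_iff_add_eq, ← add_div,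
    div_eq_one_iff_eq (coreNum_empty_ne_zero n), hadd]
  push_cast
  rfl

theorem gfn_one_left {n j : ℕ} (hj : j < 2 * n) :
    gfn (n + 1) 1 (j + 2) = Zpm n ∅ / Zpm (n + 1) ∅ * gb n j := by
  have hcore := coreNum_empty_ne_zero n
  rw [gfn_eq (n + 1) (by omega) (by omega), gb_eq n hj, Zpm_empty, Zpm_empty,
    ← coreNum_succ_pair n (by omega) (by omega)]
  push_cast
  field_simp

theorem gfn_add_two {n i j : ℕ} (hij : i < j) (hj : j < 2 * n) :
    gfn (n + 1) (i + 2) (j + 2) =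
      gfn n i j - gb (n + 1) (j + 2) * gb n i + gb (n + 1) (i + 2) * gb n j := by
  have hi := hij.trans hj
  have hcond := coreNum_condensation (n + 1) (i := i + 2) (j := j + 2) (by omega) (by omega)
    (by omega)
  rw [Nat.cast_succ, mul_add_one, coreNum_succ_quadruple n (by omega) (by omega) (by omega),
    coreNum_succ_pair n (by omega) (by omega), coreNum_succ_pair n (by omega) (by omega),
    coreNum_succ_one_top] at hcond
  rw [gfn_eq (n + 1) (by omega) (by omega), gfn_eq n hi hj, gb_eq (n + 1) (by omega),
    gb_eq (n + 1) (by omega), gb_eq n hi, gb_eq n hj]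
  have hcore := coreNum_empty_ne_zero n
  have hcore' := coreNum_empty_ne_zero (n + 1)
  have hcond' := congrArg (Nat.cast : ℕ → ℚ) hcond
  push_cast [mul_add_one] at hcond' ⊢
  field_simp
  linear_combination -hcond'

end Recurrence

/-- For `n ≥ 1` and `0 ≤ i < j ≤ 2n−1`: if `i = 0` then `g_n(0,j) = 1 − g_n^b(j)`;
if `i = 1` then `g_n(1,j) = (Z_{n−1}/Z_n)·g_{n−1}^b(j−2)`; and if `i ≥ 2` then
`g_n(i,j) = g_{n−1}(i−2,j−2) − g_n^b(j)·g_{n−1}^b(i−2) + g_n^b(i)·g_{n−1}^b(j−2)`. -/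
theorem gfn_recurrence (n : ℕ) (hn : 1 ≤ n) (i j : ℕ) (hij : i < j) (hj : j ≤ 2*n - 1) :
    (i = 0 → gfn n 0 j = 1 - gb n j) ∧
    (i = 1 → gfn n 1 j = (Zpm (n-1) ∅ : ℚ) / (Zpm n ∅ : ℚ) * gb (n-1) (j-2)) ∧
    (2 ≤ i → gfn n i j = gfn (n-1) (i-2) (j-2) - gb n j * gb (n-1) (i-2)
        + gb n i * gb (n-1) (j-2)) := by
  obtain ⟨m, rfl⟩ := Nat.exists_eq_add_of_le' hn
  refine ⟨?_, ?_, fun hi => ?_⟩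
  · rintro rfl
    exact gfn_zero_left hij (by omega)
  · rintro rfl
    obtain ⟨k, rfl⟩ := Nat.exists_eq_add_of_le' (show 2 ≤ j from hij)
    exact gfn_one_left (by omega)
  · obtain ⟨h, rfl⟩ := Nat.exists_eq_add_of_le' hi
    obtain ⟨k, rfl⟩ := Nat.exists_eq_add_of_le' (hi.trans hij.le)
    exact gfn_add_two (by omega) (by omega)
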